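/- arXiv:2305.03579 — 5 statements merged into one kernel-verified Lean document; each statement's English description precedes it below -/
import Mathlib

section
/- Let A, B, C, D : ℝ⁴ → ℝ be functions, let G_α be the Lychagin–Rubtsov matrix with rows [[2C, −2B, D, 0], [−2B, 2A, 0, D], [D, 0, 0, 0], [0, D, 0, 0]], and let u ∈ ℝ⁴ with D u ≠ 0. Then: (i) the subspace of ℝ⁴ spanned by the standard basis vectors e₃ and e₄ is totally isotropic for the bilinear form v, w ↦ vᵀ (G_α u) w; and (ii) the symmetric matrix G_α u has signature (2,2), i.e., there exists an invertible matrix P ∈ Matrix (Fin 4) (Fin 4) ℝ with Pᵀ (G_α u) P equal to the diagonal matrix diag(1, 1, −1, −1). -/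
open Matrix

/-- The Lychagin–Rubtsov matrix associated with coefficient functions
`A B C D : (Fin 4 → ℝ) → ℝ`, evaluated pointwise. -/
noncomputable def LRmatrix (A B C D : (Fin 4 → ℝ) → ℝ) (u : Fin 4 → ℝ) :
    Matrix (Fin 4) (Fin 4) ℝ :=
  !![2 * C u, -2 * B u, D u, 0;
     -2 * B u, 2 * A u, 0, D u;
     D u, 0, 0, 0;
     0, D u, 0, 0]

/-!
A symmetric matrix in block form `[A, B; Bᵀ, 0]` with `B` invertible is a hyperbolic form in
disguise: completing the square in the first block variable, i.e. the shear by `-½ B⁻¹ A`, removes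
`A`, after which a change of variables in the second block turns `B` into `½`. The form becomes
`(x, y) ↦ x ⬝ y`, which the substitution `x = s - t`, `y = s + t` turns into `s ⬝ s - t ⬝ t`.
-/

section Isotropic

variable {m n R : Type*} [Fintype m] [Fintype n] [DecidableEq m] [DecidableEq n] [CommSemiring R]

theorem dotProduct_mulVec_eq_zero_of_mem_span_single (M : Matrix m n R) {s : Set m} {t : Set n}
    (hM : ∀ i ∈ s, ∀ j ∈ t, M i j = 0) {v : m → R} {w : n → R}
    (hv : v ∈ Submodule.span R ((fun i ↦ (Pi.single i 1 : m → R)) '' s))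
    (hw : w ∈ Submodule.span R ((fun j ↦ (Pi.single j 1 : n → R)) '' t)) : v ⬝ᵥ M *ᵥ w = 0 := by
  rw [← Matrix.toLinearMap₂'_apply' M v w, ← Submodule.mem_bot R]
  refine LinearMap.BilinMap.apply_apply_mem_of_mem_span ⊥ _ _ _ ?_ v w hv hw
  rintro _ ⟨i, hi, rfl⟩ _ ⟨j, hj, rfl⟩
  rw [Submodule.mem_bot, Matrix.toLinearMap₂'_apply', single_one_dotProduct, mulVec_single_one,
    col_apply, hM i hi j hj]

end Isotropic

section Congruence

variable {n R : Type*} [Fintype n] [DecidableEq n] [CommSemiring R]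

/-- Congruence of square matrices: `M` and `N` represent the same bilinear form in two bases, the
columns of `P` being the new basis written in the old one. -/
def IsCongruent (M N : Matrix n n R) : Prop :=
  ∃ P : Matrix n n R, IsUnit P ∧ Pᵀ * M * P = N

theorem IsCongruent.trans {L M N : Matrix n n R} :
    IsCongruent L M → IsCongruent M N → IsCongruent L N := by
  rintro ⟨P, hP, rfl⟩ ⟨Q, hQ, rfl⟩
  exact ⟨P * Q, hP.mul hQ, by simp only [transpose_mul, Matrix.mul_assoc]⟩

theorem IsCongruent.submatrix {m : Type*} [Fintype m] [DecidableEq m] {M N : Matrix n n R}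
    (h : IsCongruent M N) (e : m ≃ n) : IsCongruent (M.submatrix e e) (N.submatrix e e) := by
  obtain ⟨P, hP, rfl⟩ := h
  refine ⟨P.submatrix e e, hP.map (reindexAlgEquiv R R e.symm), ?_⟩
  simp only [transpose_submatrix, submatrix_mul_equiv]

end Congruence

section SplitSignature

open LieAlgebra.Orthogonal

variable {l R : Type*} [Fintype l] [DecidableEq l] [CommRing R] [Invertible (2 : R)]

theorem isCongruent_fromBlocks_zero₂₂_antidiagonal {A B C : Matrix l l R} (hA : A.IsSymm)
    (hB : IsUnit B) (hC : IsUnit C) :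
    IsCongruent (fromBlocks A B Bᵀ 0) (fromBlocks 0 C Cᵀ 0) := by
  obtain ⟨_⟩ := hB.nonempty_invertible
  set X : Matrix l l R := -(⅟(2 : R) • (⅟B * A))
  have hBX : B * X = -(⅟(2 : R) • A) := by
    rw [mul_neg, mul_smul_comm, mul_invOf_cancel_left]
  have hXB : Xᵀ * Bᵀ = -(⅟(2 : R) • A) := by
    rw [← transpose_mul, hBX, transpose_neg, transpose_smul, hA.eq]
  have complete_square : A + -(⅟(2 : R) • A) + -(⅟(2 : R) • A) = 0 := by
    rw [add_assoc, ← neg_add, ← add_smul, invOf_two_add_invOf_two, one_smul, add_neg_cancel]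
  have hBC : B * (⅟B * C) = C := mul_invOf_cancel_left B C
  have hCB : (⅟B * C)ᵀ * Bᵀ = Cᵀ := by rw [← transpose_mul, hBC]
  refine ⟨fromBlocks 1 0 X (⅟B * C), ?_, ?_⟩
  · exact isUnit_fromBlocks_zero₁₂.2 ⟨isUnit_one, (isUnit_of_invertible (⅟B)).mul hC⟩
  · simp only [fromBlocks_transpose, fromBlocks_multiply, transpose_one, transpose_zero,
      Matrix.one_mul, Matrix.mul_one, Matrix.zero_mul, Matrix.mul_zero, add_zero, zero_add,
      hXB, hBX, hBC, hCB, complete_square]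

theorem isCongruent_invOf_two_smul_JD_indefiniteDiagonal :
    IsCongruent (⅟(2 : R) • JD l R) (indefiniteDiagonal l l R) := by
  refine ⟨PD l R, isUnit_of_invertible _, ?_⟩
  rw [Matrix.mul_smul, Matrix.smul_mul, jd_transform, invOf_smul_smul, S]

theorem isCongruent_fromBlocks_zero₂₂_indefiniteDiagonal {A B : Matrix l l R} (hA : A.IsSymm)
    (hB : IsUnit B) : IsCongruent (fromBlocks A B Bᵀ 0) (indefiniteDiagonal l l R) := by
  have hHalf : IsUnit (⅟(2 : R) • (1 : Matrix l l R)) :=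
    isUnit_one.smul (unitOfInvertible (⅟(2 : R)))
  have hJD : fromBlocks 0 (⅟(2 : R) • 1) (⅟(2 : R) • 1)ᵀ 0 = ⅟(2 : R) • JD l R := by
    simp only [JD, fromBlocks_smul, transpose_smul, transpose_one, smul_zero]
  refine (isCongruent_fromBlocks_zero₂₂_antidiagonal hA hB hHalf).trans ?_
  rw [hJD]
  exact isCongruent_invOf_two_smul_JD_indefiniteDiagonal

end SplitSignature

theorem diagonal_eq_submatrix_indefiniteDiagonal {R : Type*} [CommRing R] :
    diagonal ![1, 1, -1, -1] =
      (LieAlgebra.Orthogonal.indefiniteDiagonal (Fin 2) (Fin 2) R).submatrix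
        finSumFinEquiv.symm finSumFinEquiv.symm := by
  rw [LieAlgebra.Orthogonal.indefiniteDiagonal, submatrix_diagonal_equiv]
  congr 1
  ext i
  fin_cases i <;> rfl

theorem LRmatrix_eq_submatrix_fromBlocks (A B C D : (Fin 4 → ℝ) → ℝ) (u : Fin 4 → ℝ) :
    LRmatrix A B C D u =
      (fromBlocks !![2 * C u, -2 * B u; -2 * B u, 2 * A u]
          (diagonal fun _ : Fin 2 ↦ D u) (diagonal fun _ : Fin 2 ↦ D u)ᵀ 0).submatrix
        (finSumFinEquiv (n := 2)).symm (finSumFinEquiv (n := 2)).symm := by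
  ext i j
  fin_cases i <;> fin_cases j <;> rfl

theorem LRmatrix_isCongruent_diagonal (A B C D : (Fin 4 → ℝ) → ℝ) {u : Fin 4 → ℝ}
    (hD : D u ≠ 0) : IsCongruent (LRmatrix A B C D u) (diagonal ![1, 1, -1, -1]) := by
  have hSymm : !![2 * C u, -2 * B u; -2 * B u, 2 * A u].IsSymm :=
    IsSymm.ext fun i j ↦ by fin_cases i <;> fin_cases j <;> rfl
  have hUnit : IsUnit (diagonal fun _ : Fin 2 ↦ D u) :=
    isUnit_diagonal.2 (Pi.isUnit_iff.2 fun _ ↦ hD.isUnit)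
  rw [LRmatrix_eq_submatrix_fromBlocks, diagonal_eq_submatrix_indefiniteDiagonal]
  exact (isCongruent_fromBlocks_zero₂₂_indefiniteDiagonal hSymm hUnit).submatrix _

/-- If `D u ≠ 0` then (i) the span of the standard basis vectors `e₃, e₄` is totally
isotropic for the bilinear form `(v, w) ↦ vᵀ (G_α u) w`, and (ii) `G_α u` has signature
`(2,2)`: it is congruent to `diag(1, 1, -1, -1)`. -/
theorem LR_isotropic_and_signature (A B C D : (Fin 4 → ℝ) → ℝ) (u : Fin 4 → ℝ)
    (hD : D u ≠ 0) :
    (∀ v ∈ Submodule.span ℝ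
        ({Pi.single (2 : Fin 4) (1 : ℝ), Pi.single (3 : Fin 4) (1 : ℝ)} :
          Set (Fin 4 → ℝ)),
      ∀ w ∈ Submodule.span ℝ
        ({Pi.single (2 : Fin 4) (1 : ℝ), Pi.single (3 : Fin 4) (1 : ℝ)} :
          Set (Fin 4 → ℝ)),
        v ⬝ᵥ (LRmatrix A B C D u).mulVec w = 0) ∧
    (∃ P : Matrix (Fin 4) (Fin 4) ℝ, IsUnit P ∧
        Pᵀ * LRmatrix A B C D u * P =
          Matrix.diagonal ![1, 1, -1, -1]) := by
  refine ⟨fun v hv w hw ↦ ?_, LRmatrix_isCongruent_diagonal A B C D hD⟩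
  rw [← Set.image_pair (fun i ↦ (Pi.single i 1 : Fin 4 → ℝ))] at hv hw
  refine dotProduct_mulVec_eq_zero_of_mem_span_single _ ?_ hv hw
  rintro i (rfl | rfl) j (rfl | rfl) <;> rfl
end

section
/- Let c₁, …, c₆ ∈ ℝ satisfy c₂c₄ + c₃c₅ − c₁c₆ = 0, let L(x,y,p,q) = c₁ + c₂x + c₃y + c₄p + c₅q + c₆(xp + yq), let U ⊆ ℝ⁴ be an open set on which L is nowhere zero, and let D = L⁻² on U. Then the Ricci tensor of the reduced Lychagin–Rubtsov metric G_D (computed from the coordinate Christoffel symbols and curvature tensor) vanishes identically on U. -/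
/-- Partial derivative of `f : ℝ⁴ → ℝ` in the `i`-th coordinate direction. -/
noncomputable def pd (i : Fin 4) (f : (Fin 4 → ℝ) → ℝ) (u : Fin 4 → ℝ) : ℝ :=
  fderiv ℝ f u (Pi.single i 1)

/-- Christoffel symbols `Γᵏᵢⱼ` of a matrix-valued metric `g` in coordinates. -/
noncomputable def christoffel (g : (Fin 4 → ℝ) → Matrix (Fin 4) (Fin 4) ℝ)
    (k i j : Fin 4) (u : Fin 4 → ℝ) : ℝ :=
  (1 / 2) * ∑ l, (g u)⁻¹ k l *
    (pd i (fun v => g v j l) u + pd j (fun v => g v i l) u - pd l (fun v => g v i j) u)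

/-- Curvature tensor `Rˡᵢⱼₖ` of a matrix-valued metric `g` in coordinates. -/
noncomputable def riemann (g : (Fin 4 → ℝ) → Matrix (Fin 4) (Fin 4) ℝ)
    (l i j k : Fin 4) (u : Fin 4 → ℝ) : ℝ :=
  pd j (christoffel g l i k) u - pd k (christoffel g l i j) u +
    ∑ m, (christoffel g l j m u * christoffel g m i k u -
          christoffel g l k m u * christoffel g m i j u)

/-- Ricci tensor `Ricᵢₖ = Σₗ Rˡᵢₗₖ`. -/
noncomputable def ricci (g : (Fin 4 → ℝ) → Matrix (Fin 4) (Fin 4) ℝ)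
    (i k : Fin 4) (u : Fin 4 → ℝ) : ℝ :=
  ∑ l, riemann g l i l k u

/-- Scalar curvature `R = Σᵢₖ (g⁻¹)ⁱᵏ Ricᵢₖ`. -/
noncomputable def scalarCurv (g : (Fin 4 → ℝ) → Matrix (Fin 4) (Fin 4) ℝ)
    (u : Fin 4 → ℝ) : ℝ :=
  ∑ i, ∑ k, (g u)⁻¹ i k * ricci g i k u

/-- The reduced Lychagin–Rubtsov metric associated with `D : ℝ⁴ → ℝ`. -/
noncomputable def GD (D : (Fin 4 → ℝ) → ℝ) (u : Fin 4 → ℝ) :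
    Matrix (Fin 4) (Fin 4) ℝ :=
  !![0, 0, D u, 0;
     0, 0, 0, D u;
     D u, 0, 0, 0;
     0, D u, 0, 0]

/-! With the constant metric `η = 2 (dx dp + dy dq)` and `φ = -log |L|`, the metric
`G_D = e^{2φ} η` is conformally flat. For such metrics the Christoffel symbols are linear in `dφ`,
which yields the classical formula `Ric = -2 (∇dφ - dφ ⊗ dφ) - (Δφ + 2 |dφ|²) η` in dimension four.
For `L = c₀ + a · u + (c / 2) η(u, u)` the Hessian is `c η` and `|dL|² = |a|² + 2 c (L - c₀)`, so
the metric is Einstein, `Ric = 3 (2 c c₀ - |a|²) L⁻² η`, and the Einstein constant is a multiple of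
the Plücker expression. -/

open Filter Topology Matrix

section ConformalChristoffel

variable {ι R : Type*} [Fintype ι] [DecidableEq ι] [CommRing R]

/-- The symbols `δᵏⱼ pᵢ + δᵏᵢ pⱼ - ηᵢⱼ pᵏ` attached to a covector `p` and a constant metric `η`,
which raises the index of `p`. They are the Christoffel symbols of `e^{2φ} η` when `p = dφ`. -/
noncomputable def conformalChristoffel (η : Matrix ι ι R) (p : ι → R) (k i j : ι) : R :=
  (1 : Matrix ι ι R) k j * p i + (1 : Matrix ι ι R) k i * p j - η i j * (η⁻¹ *ᵥ p) k

variable {η : Matrix ι ι R}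

lemma conformalChristoffel_comm (hη : η.IsSymm) (p : ι → R) (k i j : ι) :
    conformalChristoffel η p k i j = conformalChristoffel η p k j i := by
  simp only [conformalChristoffel, hη.apply i j]
  ring

lemma mulVec_inv_mulVec (hdet : IsUnit η.det) (p : ι → R) : η *ᵥ (η⁻¹ *ᵥ p) = p := by
  rw [mulVec_mulVec, mul_nonsing_inv η hdet, one_mulVec]

lemma sum_mul_conformalChristoffel (q p : ι → R) (i j : ι) :
    ∑ m, q m * conformalChristoffel η p m i j =
      p i * q j + q i * p j - (q ⬝ᵥ η⁻¹ *ᵥ p) * η i j := by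
  simp only [conformalChristoffel, dotProduct, mul_sub, mul_add, Finset.sum_sub_distrib,
    Finset.sum_add_distrib, Finset.sum_mul, one_apply, ite_mul, mul_ite, one_mul, zero_mul,
    mul_zero, Finset.sum_ite_eq', Finset.mem_univ, if_true]
  congr 1
  · ring
  · exact Finset.sum_congr rfl fun m _ => by ring

lemma sum_metric_mul_conformalChristoffel (hdet : IsUnit η.det) (p : ι → R) (k i j : ι) :
    ∑ m, η k m * conformalChristoffel η p m i j = p i * η k j + η k i * p j - p k * η i j := by
  rw [sum_mul_conformalChristoffel, ← congrFun (mulVec_inv_mulVec hdet p) k]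
  rfl

lemma sum_conformalChristoffel_contract (hdet : IsUnit η.det) (p : ι → R) (i : ι) :
    ∑ l, conformalChristoffel η p l i l = Fintype.card ι * p i := by
  have hlower : ∑ l, η i l * (η⁻¹ *ᵥ p) l = p i := congrFun (mulVec_inv_mulVec hdet p) i
  simp [conformalChristoffel, Finset.sum_sub_distrib, Finset.sum_add_distrib, hlower, one_apply]

lemma sum_conformalChristoffel_divergence {H : Matrix ι ι R} (hH : H.IsSymm) (i k : ι) :
    ∑ l, conformalChristoffel η (H l) l i k = 2 * H i k - (η⁻¹ * H).trace * η i k := by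
  have htrace : ∑ l, (η⁻¹ *ᵥ H l) l = (η⁻¹ * H).trace := by
    simp only [trace, diag_apply, mul_apply, mulVec, dotProduct, fun l m => hH.apply m l]
  simp only [conformalChristoffel, Finset.sum_sub_distrib, Finset.sum_add_distrib, one_apply,
    ite_mul, one_mul, zero_mul, Finset.sum_ite_eq', Finset.mem_univ, if_true, ← Finset.mul_sum,
    htrace, hH.apply i k]
  ring

lemma sum_conformalChristoffel_mul_contract (hη : η.IsSymm) (hdet : IsUnit η.det) (p : ι → R)
    (i k : ι) :
    ∑ l, ∑ m, conformalChristoffel η p l l m * conformalChristoffel η p m i k =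
      Fintype.card ι * (2 * (p i * p k) - (p ⬝ᵥ η⁻¹ *ᵥ p) * η i k) := by
  rw [Finset.sum_comm]
  simp only [← Finset.sum_mul, conformalChristoffel_comm hη p _ _ _,
    sum_conformalChristoffel_contract hdet, mul_assoc, ← Finset.mul_sum,
    sum_mul_conformalChristoffel]
  ring

lemma sum_conformalChristoffel_mul_swap (hη : η.IsSymm) (hdet : IsUnit η.det) (p : ι → R)
    (i k : ι) :
    ∑ l, ∑ m, conformalChristoffel η p l k m * conformalChristoffel η p m i l =
      (Fintype.card ι + 2) * (p i * p k) - 2 * (p ⬝ᵥ η⁻¹ *ᵥ p) * η i k := by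
  have hlower (j : ι) : ∑ l, η j l * (η⁻¹ *ᵥ p) l = p j := congrFun (mulVec_inv_mulVec hdet p) j
  have hinner (l : ι) :
      ∑ m, conformalChristoffel η p l k m * conformalChristoffel η p m i l =
        p k * conformalChristoffel η p l i l +
          (1 : Matrix ι ι R) l k * (2 * (p i * p l) - (p ⬝ᵥ η⁻¹ *ᵥ p) * η i l) -
          (p i * (η k l * (η⁻¹ *ᵥ p) l) + η k i * (p l * (η⁻¹ *ᵥ p) l) -
            p k * (η i l * (η⁻¹ *ᵥ p) l)) := by
    have hexpand : ∑ m, conformalChristoffel η p l k m * conformalChristoffel η p m i l =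
        p k * ∑ m, (1 : Matrix ι ι R) l m * conformalChristoffel η p m i l +
          (1 : Matrix ι ι R) l k * ∑ m, p m * conformalChristoffel η p m i l -
          (η⁻¹ *ᵥ p) l * ∑ m, η k m * conformalChristoffel η p m i l := by
      simp only [Finset.mul_sum, ← Finset.sum_add_distrib, ← Finset.sum_sub_distrib]
      refine Finset.sum_congr rfl fun m _ => ?_
      rw [conformalChristoffel]
      ring
    have hdelta : ∑ m, (1 : Matrix ι ι R) l m * conformalChristoffel η p m i l =
        conformalChristoffel η p l i l := by
      simp [one_apply]
    rw [hexpand, hdelta, sum_mul_conformalChristoffel p p,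
      sum_metric_mul_conformalChristoffel hdet]
    ring
  simp only [hinner, Finset.sum_sub_distrib, Finset.sum_add_distrib, ← Finset.mul_sum, hlower,
    sum_conformalChristoffel_contract hdet, one_apply, ite_mul, one_mul, zero_mul,
    Finset.sum_ite_eq', Finset.mem_univ, if_true, hη.apply i k]
  rw [← dotProduct]
  ring

end ConformalChristoffel

section Calculus

variable {f : (Fin 4 → ℝ) → ℝ} {u : Fin 4 → ℝ}

/-- The coordinate differential `(∂ᵢ f)ᵢ`, as a covector. -/
noncomputable def coordGrad (f : (Fin 4 → ℝ) → ℝ) (u : Fin 4 → ℝ) : Fin 4 → ℝ :=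
  fun i => pd i f u

/-- The coordinate Hessian, with rows indexed by the outer derivative: its row `m` is the
derivative `∂ₘ` of the covector `coordGrad f`. -/
noncomputable def coordHess (f : (Fin 4 → ℝ) → ℝ) (u : Fin 4 → ℝ) : Matrix (Fin 4) (Fin 4) ℝ :=
  fun m i => pd m (pd i f) u

lemma pd_eq_of_hasFDerivAt {f' : (Fin 4 → ℝ) →L[ℝ] ℝ} (hf : HasFDerivAt f f' u) (i : Fin 4) :
    pd i f u = f' (Pi.single i 1) := by
  rw [pd, hf.fderiv]

lemma pd_congr {g : (Fin 4 → ℝ) → ℝ} (h : f =ᶠ[𝓝 u] g) (i : Fin 4) : pd i f u = pd i g u := by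
  rw [pd, pd, h.fderiv_eq]

lemma differentiableAt_pd (hf : ContDiffAt ℝ 2 f u) (i : Fin 4) :
    DifferentiableAt ℝ (pd i f) u :=
  ((hf.fderiv_right (m := 1) (by norm_num)).differentiableAt one_ne_zero).clm_apply
    (differentiableAt_const _)

lemma coordHess_isSymm (hf : ContDiffAt ℝ 2 f u) : (coordHess f u).IsSymm := by
  have hfderiv : DifferentiableAt ℝ (fderiv ℝ f) u :=
    (hf.fderiv_right (m := 1) (by norm_num)).differentiableAt one_ne_zero
  have happly (m i : Fin 4) : coordHess f u m i =
      fderiv ℝ (fderiv ℝ f) u (Pi.single m 1) (Pi.single i 1) := by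
    refine (pd_eq_of_hasFDerivAt
      (hfderiv.hasFDerivAt.clm_apply (hasFDerivAt_const (Pi.single i (1 : ℝ)) u)) m).trans ?_
    simp
  refine IsSymm.ext fun i j => ?_
  rw [happly, happly]
  exact hf.isSymmSndFDerivAt (by simp) _ _

lemma eventually_differentiableAt (hf : ContDiffAt ℝ 2 f u) :
    ∀ᶠ v in 𝓝 u, DifferentiableAt ℝ f v :=
  (hf.eventually (by simp)).mono fun _ hv => hv.differentiableAt two_ne_zero

lemma coordGrad_neg_log (hf : DifferentiableAt ℝ f u) (h0 : f u ≠ 0) :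
    coordGrad (fun v => -Real.log (f v)) u = -(f u)⁻¹ • coordGrad f u := by
  ext i
  refine (pd_eq_of_hasFDerivAt (hf.hasFDerivAt.log h0).neg i).trans ?_
  simp [coordGrad, pd]

lemma coordHess_neg_log (hf : ContDiffAt ℝ 2 f u) (h0 : f u ≠ 0) :
    coordHess (fun v => -Real.log (f v)) u =
      -(f u)⁻¹ • coordHess f u + ((f u) ^ 2)⁻¹ • vecMulVec (coordGrad f u) (coordGrad f u) := by
  ext m i
  have hgrad : pd i (fun v => -Real.log (f v)) =ᶠ[𝓝 u] fun v => -((f v)⁻¹ * pd i f v) := by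
    filter_upwards [eventually_differentiableAt hf, hf.continuousAt.eventually_ne h0] with v hv hv0
    simpa [coordGrad] using congrFun (coordGrad_neg_log hv hv0) i
  have hinv := (hasDerivAt_inv h0).comp_hasFDerivAt u (hf.differentiableAt two_ne_zero).hasFDerivAt
  refine (pd_congr hgrad m).trans <| (pd_eq_of_hasFDerivAt
    (hinv.mul (differentiableAt_pd hf i).hasFDerivAt).neg m).trans ?_
  simp only [Function.comp_apply, pd, neg_smul, smul_neg, neg_add_rev, neg_neg, _root_.add_apply,
    _root_.smul_apply, smul_eq_mul, _root_.neg_apply, Matrix.add_apply, Matrix.neg_apply,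
    Matrix.smul_apply, coordHess, vecMulVec_apply, coordGrad]
  ring

end Calculus

section Locality

variable {g h : (Fin 4 → ℝ) → Matrix (Fin 4) (Fin 4) ℝ} {u : Fin 4 → ℝ}

lemma christoffel_congr (hgh : g =ᶠ[𝓝 u] h) (k i j : Fin 4) :
    christoffel g k i j u = christoffel h k i j u := by
  have hentry (a b : Fin 4) : (fun v => g v a b) =ᶠ[𝓝 u] fun v => h v a b :=
    hgh.fun_comp fun M => M a b
  simp only [christoffel, hgh.eq_of_nhds, pd_congr (hentry _ _)]

lemma ricci_congr (hgh : g =ᶠ[𝓝 u] h) (i k : Fin 4) : ricci g i k u = ricci h i k u := by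
  have hchristoffel (l a b : Fin 4) : christoffel g l a b =ᶠ[𝓝 u] christoffel h l a b :=
    hgh.eventuallyEq_nhds.mono fun _ hv => christoffel_congr hv l a b
  simp only [ricci, riemann, pd_congr (hchristoffel _ _ _), (hchristoffel _ _ _).eq_of_nhds]

end Locality

section ConformallyFlat

variable {η : Matrix (Fin 4) (Fin 4) ℝ} {u : Fin 4 → ℝ}

/-- The conformally flat metric `e^{2φ} η` with constant background metric `η`. -/
noncomputable def conformallyFlat (η : Matrix (Fin 4) (Fin 4) ℝ) (φ : (Fin 4 → ℝ) → ℝ)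
    (u : Fin 4 → ℝ) : Matrix (Fin 4) (Fin 4) ℝ :=
  Real.exp (2 * φ u) • η

lemma conformallyFlat_inv (hdet : IsUnit η.det) (φ : (Fin 4 → ℝ) → ℝ) :
    (conformallyFlat η φ u)⁻¹ = Real.exp (-(2 * φ u)) • η⁻¹ := by
  refine inv_eq_right_inv ?_
  rw [conformallyFlat, smul_mul_smul_comm, ← Real.exp_add, add_neg_cancel, Real.exp_zero,
    mul_nonsing_inv η hdet, one_smul]

lemma pd_conformallyFlat {φ : (Fin 4 → ℝ) → ℝ} (hφ : DifferentiableAt ℝ φ u) (m i j : Fin 4) :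
    pd m (fun v => conformallyFlat η φ v i j) u =
      Real.exp (2 * φ u) * (2 * coordGrad φ u m * η i j) := by
  have hderiv := ((hφ.hasFDerivAt.const_mul 2).exp).mul_const (η i j)
  refine (pd_eq_of_hasFDerivAt hderiv m).trans ?_
  simp only [_root_.smul_apply, smul_eq_mul, coordGrad, pd]
  ring

lemma christoffel_conformallyFlat (hη : η.IsSymm) (hdet : IsUnit η.det) {φ : (Fin 4 → ℝ) → ℝ}
    (hφ : DifferentiableAt ℝ φ u) (k i j : Fin 4) :
    christoffel (conformallyFlat η φ) k i j u =
      conformalChristoffel η (coordGrad φ u) k i j := by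
  set p := coordGrad φ u
  have hdelta (a : Fin 4) : ∑ l, η⁻¹ k l * η a l = (1 : Matrix (Fin 4) (Fin 4) ℝ) k a := by
    simp only [← nonsing_inv_mul η hdet, mul_apply, fun l => hη.apply l a]
  have hexp : Real.exp (-(2 * φ u)) * Real.exp (2 * φ u) = 1 := by
    rw [← Real.exp_add, neg_add_cancel, Real.exp_zero]
  calc christoffel (conformallyFlat η φ) k i j u
      = (Real.exp (-(2 * φ u)) * Real.exp (2 * φ u)) *
          ∑ l, (p i * (η⁻¹ k l * η j l) + p j * (η⁻¹ k l * η i l) -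
            η i j * (η⁻¹ k l * p l)) := by
        simp only [christoffel, conformallyFlat_inv hdet, pd_conformallyFlat hφ, Matrix.smul_apply,
          smul_eq_mul, Finset.mul_sum]
        exact Finset.sum_congr rfl fun l _ => by ring
    _ = conformalChristoffel η p k i j := by
        simp only [hexp, Finset.sum_sub_distrib, Finset.sum_add_distrib, ← Finset.mul_sum, hdelta,
          conformalChristoffel, mulVec, dotProduct]
        ring

lemma pd_christoffel_conformallyFlat (hη : η.IsSymm) (hdet : IsUnit η.det)
    {φ : (Fin 4 → ℝ) → ℝ} (hφ : ContDiffAt ℝ 2 φ u) (m k i j : Fin 4) :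
    pd m (christoffel (conformallyFlat η φ) k i j) u =
      conformalChristoffel η (coordHess φ u m) k i j := by
  have hchristoffel : christoffel (conformallyFlat η φ) k i j =ᶠ[𝓝 u]
      fun v => conformalChristoffel η (coordGrad φ v) k i j :=
    (eventually_differentiableAt hφ).mono fun v hv => christoffel_conformallyFlat hη hdet hv k i j
  have hpd (a : Fin 4) := (differentiableAt_pd hφ a).hasFDerivAt
  have hraise := HasFDerivAt.fun_sum (u := Finset.univ) fun l _ => (hpd l).const_mul (η⁻¹ k l)
  rw [pd_congr hchristoffel]
  refine (pd_eq_of_hasFDerivAt ((((hpd i).const_mul ((1 : Matrix _ _ ℝ) k j)).add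
    ((hpd j).const_mul ((1 : Matrix _ _ ℝ) k i))).sub (hraise.const_mul (η i j))) m).trans ?_
  simp [conformalChristoffel, coordHess, mulVec, dotProduct, pd]

theorem ricci_conformallyFlat (hη : η.IsSymm) (hdet : IsUnit η.det) {φ : (Fin 4 → ℝ) → ℝ}
    (hφ : ContDiffAt ℝ 2 φ u) (i k : Fin 4) :
    ricci (conformallyFlat η φ) i k u =
      -2 * (coordHess φ u i k - coordGrad φ u i * coordGrad φ u k) -
        ((η⁻¹ * coordHess φ u).trace + 2 * (coordGrad φ u ⬝ᵥ η⁻¹ *ᵥ coordGrad φ u)) * η i k := by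
  simp only [ricci, riemann, pd_christoffel_conformallyFlat hη hdet hφ,
    christoffel_conformallyFlat hη hdet (hφ.differentiableAt two_ne_zero),
    Finset.sum_add_distrib, Finset.sum_sub_distrib,
    sum_conformalChristoffel_divergence (coordHess_isSymm hφ),
    sum_conformalChristoffel_contract hdet, sum_conformalChristoffel_mul_contract hη hdet,
    sum_conformalChristoffel_mul_swap hη hdet, (coordHess_isSymm hφ).apply i k, Fintype.card_fin]
  push_cast
  ring

theorem ricci_inv_sq_smul (hη : η.IsSymm) (hdet : IsUnit η.det) {L : (Fin 4 → ℝ) → ℝ}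
    (hL : ContDiffAt ℝ 2 L u) (h0 : L u ≠ 0) (i k : Fin 4) :
    ricci (fun v => (L v ^ 2)⁻¹ • η) i k u =
      2 * (L u)⁻¹ * coordHess L u i k +
        ((L u)⁻¹ * (η⁻¹ * coordHess L u).trace -
          3 * (L u ^ 2)⁻¹ * (coordGrad L u ⬝ᵥ η⁻¹ *ᵥ coordGrad L u)) * η i k := by
  have hexp : (fun v => (L v ^ 2)⁻¹ • η) =ᶠ[𝓝 u] conformallyFlat η fun v => -Real.log (L v) := by
    filter_upwards [hL.continuousAt.eventually_ne h0] with v hv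
    rw [conformallyFlat, mul_neg, Real.exp_neg, two_mul, Real.exp_add, Real.exp_log_eq_abs hv,
      abs_mul_abs_self, sq]
  have htrace : (η⁻¹ * vecMulVec (coordGrad L u) (coordGrad L u)).trace =
      coordGrad L u ⬝ᵥ η⁻¹ *ᵥ coordGrad L u := by
    rw [mul_vecMulVec, trace_vecMulVec, dotProduct_comm]
  rw [ricci_congr hexp, ricci_conformallyFlat hη hdet (hL.log h0).neg, coordHess_neg_log hL h0,
    coordGrad_neg_log (hL.differentiableAt two_ne_zero) h0]
  simp only [Matrix.mul_add, Matrix.mul_smul, trace_add, trace_smul, htrace, mulVec_smul,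
    dotProduct_smul, smul_dotProduct, Matrix.add_apply, Matrix.smul_apply, vecMulVec_apply,
    Pi.smul_apply, smul_eq_mul]
  ring

end ConformallyFlat

section Quadric

variable {η : Matrix (Fin 4) (Fin 4) ℝ}

/-- The quadratic function `c₀ + a · u + (c / 2) η(u, u)`, whose quadratic part is proportional to
the background metric `η`. -/
noncomputable def metricQuadric (η : Matrix (Fin 4) (Fin 4) ℝ) (c₀ : ℝ) (a : Fin 4 → ℝ) (c : ℝ)
    (u : Fin 4 → ℝ) : ℝ :=
  c₀ + a ⬝ᵥ u + c / 2 * (u ⬝ᵥ η *ᵥ u)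

variable (c₀ : ℝ) (a : Fin 4 → ℝ) (c : ℝ) (u : Fin 4 → ℝ)

lemma contDiff_metricQuadric : ContDiff ℝ 2 (metricQuadric η c₀ a c) := by
  unfold metricQuadric dotProduct mulVec dotProduct
  fun_prop

lemma hasFDerivAt_dotProduct_const_left :
    HasFDerivAt (fun v => a ⬝ᵥ v) (dotProductBilin ℝ ℝ a).toContinuousLinearMap u :=
  (dotProductBilin ℝ ℝ a).toContinuousLinearMap.hasFDerivAt

lemma hasFDerivAt_dotProduct_mulVec_self (hη : η.IsSymm) :
    HasFDerivAt (fun v => v ⬝ᵥ η *ᵥ v)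
      (dotProductBilin ℝ ℝ (2 • η *ᵥ u)).toContinuousLinearMap u := by
  have hsum := HasFDerivAt.fun_sum (u := Finset.univ) fun i _ =>
    (hasFDerivAt_apply i u).mul (hasFDerivAt_dotProduct_const_left (η i) u)
  refine hsum.congr_fderiv (ContinuousLinearMap.ext fun v => ?_)
  have hsymm : u ⬝ᵥ η *ᵥ v = (η *ᵥ u) ⬝ᵥ v := by
    rw [dotProduct_mulVec, ← mulVec_transpose, hη.eq]
  calc _ = u ⬝ᵥ η *ᵥ v + (η *ᵥ u) ⬝ᵥ v := by
        simp [Finset.sum_add_distrib, dotProduct, mulVec]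
    _ = (2 • η *ᵥ u) ⬝ᵥ v := by rw [hsymm, smul_dotProduct, two_smul]

lemma coordGrad_metricQuadric (hη : η.IsSymm) :
    coordGrad (metricQuadric η c₀ a c) u = a + c • η *ᵥ u := by
  ext i
  refine (pd_eq_of_hasFDerivAt (((hasFDerivAt_dotProduct_const_left a u).const_add c₀).add
    ((hasFDerivAt_dotProduct_mulVec_self u hη).const_mul (c / 2))) i).trans ?_
  simp only [nsmul_eq_mul, Nat.cast_ofNat, _root_.add_apply,
    LinearMap.coe_toContinuousLinearMap', dotProductBilin_apply_apply, dotProduct_single, mul_one,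
    _root_.smul_apply, Pi.mul_apply, Pi.ofNat_apply, smul_eq_mul, Pi.add_apply, Pi.smul_apply]
  ring

lemma coordHess_metricQuadric (hη : η.IsSymm) :
    coordHess (metricQuadric η c₀ a c) u = c • η := by
  ext m i
  have hgrad : pd i (metricQuadric η c₀ a c) = fun v => a i + c * (η i ⬝ᵥ v) :=
    funext fun v => congrFun (coordGrad_metricQuadric c₀ a c v hη) i
  rw [coordHess, hgrad, pd_eq_of_hasFDerivAt
    (((hasFDerivAt_dotProduct_const_left (η i) u).const_mul c).const_add (a i))]
  simp [hη.apply i m]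

lemma dotProduct_coordGrad_metricQuadric (hη : η.IsSymm) (hdet : IsUnit η.det) :
    coordGrad (metricQuadric η c₀ a c) u ⬝ᵥ η⁻¹ *ᵥ coordGrad (metricQuadric η c₀ a c) u =
      a ⬝ᵥ η⁻¹ *ᵥ a + 2 * c * (metricQuadric η c₀ a c u - c₀) := by
  have hinv : η⁻¹ *ᵥ (η *ᵥ u) = u := by
    rw [mulVec_mulVec, nonsing_inv_mul η hdet, one_mulVec]
  have hcross : (η *ᵥ u) ⬝ᵥ η⁻¹ *ᵥ a = a ⬝ᵥ u := by
    rw [dotProduct_mulVec, ← mulVec_transpose, transpose_nonsing_inv, hη.eq, hinv, dotProduct_comm]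
  rw [coordGrad_metricQuadric c₀ a c u hη, metricQuadric]
  simp only [mulVec_add, mulVec_smul, hinv, dotProduct_add, add_dotProduct, smul_dotProduct,
    dotProduct_smul, smul_eq_mul, hcross, dotProduct_comm (η *ᵥ u) u]
  ring

theorem ricci_inv_sq_metricQuadric_smul (hη : η.IsSymm) (hdet : IsUnit η.det)
    (h0 : metricQuadric η c₀ a c u ≠ 0) (i k : Fin 4) :
    ricci (fun v => (metricQuadric η c₀ a c v ^ 2)⁻¹ • η) i k u =
      3 * (2 * c * c₀ - a ⬝ᵥ η⁻¹ *ᵥ a) * ((metricQuadric η c₀ a c u ^ 2)⁻¹ * η i k) := by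
  rw [ricci_inv_sq_smul hη hdet (contDiff_metricQuadric c₀ a c).contDiffAt h0,
    dotProduct_coordGrad_metricQuadric c₀ a c u hη hdet, coordHess_metricQuadric c₀ a c u hη,
    Matrix.mul_smul, nonsing_inv_mul η hdet, trace_smul, trace_one, Matrix.smul_apply,
    Fintype.card_fin]
  simp only [smul_eq_mul]
  field_simp
  push_cast
  ring

end Quadric

section LychaginRubtsov

/-- The constant background metric `2 (dx dp + dy dq)` of the Lychagin–Rubtsov metrics. -/
def neutralMetric : Matrix (Fin 4) (Fin 4) ℝ :=
  !![0, 0, 1, 0;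
     0, 0, 0, 1;
     1, 0, 0, 0;
     0, 1, 0, 0]

lemma GD_eq_smul_neutralMetric (D : (Fin 4 → ℝ) → ℝ) (u : Fin 4 → ℝ) :
    GD D u = D u • neutralMetric := by
  simp [GD, neutralMetric]

lemma neutralMetric_isSymm : neutralMetric.IsSymm := by
  refine IsSymm.ext fun i j => ?_
  fin_cases i <;> fin_cases j <;> rfl

lemma neutralMetric_mul_self : neutralMetric * neutralMetric = 1 := by
  ext i j
  fin_cases i <;> fin_cases j <;> simp [neutralMetric, mul_apply, Fin.sum_univ_four]

lemma isUnit_det_neutralMetric : IsUnit neutralMetric.det :=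
  isUnit_det_of_left_inverse neutralMetric_mul_self

lemma neutralMetric_inv : neutralMetric⁻¹ = neutralMetric :=
  inv_eq_left_inv neutralMetric_mul_self

lemma dotProduct_neutralMetric_mulVec (v : Fin 4 → ℝ) :
    v ⬝ᵥ neutralMetric *ᵥ v = 2 * (v 0 * v 2 + v 1 * v 3) := by
  simp only [dotProduct, mulVec, neutralMetric, of_apply, cons_val', cons_val_fin_one,
    Fin.sum_univ_four, cons_val_zero, cons_val_one, cons_val, zero_mul, add_zero, one_mul, zero_add]
  ring

theorem ricci_flat_of_plucker_general (c₁ c₂ c₃ c₄ c₅ c₆ : ℝ)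
    (L : (Fin 4 → ℝ) → ℝ)
    (hL : L = fun u => c₁ + c₂ * u 0 + c₃ * u 1 + c₄ * u 2 + c₅ * u 3 +
      c₆ * (u 0 * u 2 + u 1 * u 3))
    (U : Set (Fin 4 → ℝ)) (hU : IsOpen U) (hL0 : ∀ u ∈ U, L u ≠ 0)
    (D : (Fin 4 → ℝ) → ℝ) (hD : ∀ u ∈ U, D u = ((L u) ^ 2)⁻¹) :
    ∀ u ∈ U, ∀ i k : Fin 4,
      ricci (GD D) i k u = -6 * (c₂ * c₄ + c₃ * c₅ - c₁ * c₆) * GD D u i k := by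
  intro u hu i k
  set a : Fin 4 → ℝ := ![c₂, c₃, c₄, c₅] with ha
  have hquadric : L = metricQuadric neutralMetric c₁ a c₆ := by
    funext v
    rw [hL, metricQuadric, dotProduct_neutralMetric_mulVec]
    simp only [dotProduct, ha, Fin.sum_univ_four, cons_val_zero, cons_val_one, cons_val]
    ring
  have hGD : GD D =ᶠ[𝓝 u] fun v => (L v ^ 2)⁻¹ • neutralMetric := by
    filter_upwards [hU.mem_nhds hu] with v hv
    rw [GD_eq_smul_neutralMetric, hD v hv]
  have hnorm : a ⬝ᵥ neutralMetric⁻¹ *ᵥ a = 2 * (c₂ * c₄ + c₃ * c₅) := by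
    rw [neutralMetric_inv, dotProduct_neutralMetric_mulVec]
    rfl
  rw [ricci_congr hGD, hGD.eq_of_nhds, hquadric, ricci_inv_sq_metricQuadric_smul c₁ a c₆ u
    neutralMetric_isSymm isUnit_det_neutralMetric (hquadric ▸ hL0 u hu), hnorm, Matrix.smul_apply,
    smul_eq_mul]
  ring

end LychaginRubtsov

/-- If `D = L⁻²` where `L(x,y,p,q) = c₁ + c₂x + c₃y + c₄p + c₅q + c₆(xp + yq)` with
`c₂c₄ + c₃c₅ − c₁c₆ = 0`, then the Ricci tensor of the reduced Lychagin–Rubtsov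
metric `G_D` vanishes identically on any open set where `L ≠ 0`.
Coordinates: `x = u 0`, `y = u 1`, `p = u 2`, `q = u 3`. -/
theorem ricci_flat_of_plucker (c₁ c₂ c₃ c₄ c₅ c₆ : ℝ)
    (hc : c₂ * c₄ + c₃ * c₅ - c₁ * c₆ = 0)
    (L : (Fin 4 → ℝ) → ℝ)
    (hL : L = fun u => c₁ + c₂ * u 0 + c₃ * u 1 + c₄ * u 2 + c₅ * u 3 +
      c₆ * (u 0 * u 2 + u 1 * u 3))
    (U : Set (Fin 4 → ℝ)) (hU : IsOpen U) (hL0 : ∀ u ∈ U, L u ≠ 0)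
    (D : (Fin 4 → ℝ) → ℝ) (hD : ∀ u ∈ U, D u = ((L u) ^ 2)⁻¹) :
    ∀ u ∈ U, ∀ i k : Fin 4, ricci (GD D) i k u = 0 := by
  intro u hu i k
  rw [ricci_flat_of_plucker_general c₁ c₂ c₃ c₄ c₅ c₆ L hL U hU hL0 D hD u hu, hc, mul_zero,
    zero_mul]
end

section
/- Let I ⊆ ℝ be a nonempty open interval and f : I → ℝ a smooth function with f > 0 on I satisfying the ODE 3 (f′(x))² = 2 f(x) f″(x) for all x ∈ I. Then there exist constants a, b ∈ ℝ such that a + bx ≠ 0 for all x ∈ I and f(x) = (a + bx)⁻² for all x ∈ I. -/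
/-!
Whenever `(1 - p) f′² = f f″`, the second derivative
`(f ^ p)″ = p f ^ (p - 2) (f f″ - (1 - p) f′²)` vanishes, so `f ^ p` is affine. The equation
`3 f′² = 2 f f″` is the case `p = -1/2`.
-/

section Affine

variable {𝕜 E : Type*} [RCLike 𝕜] [NormedAddCommGroup E] [NormedSpace 𝕜 E]
  {s : Set 𝕜} {u u' : 𝕜 → E}

theorem eq_of_hasDerivWithinAt_eq_zero (hs : Convex ℝ s)
    (hu : ∀ x ∈ s, HasDerivWithinAt u 0 s x) {x y : 𝕜} (hx : x ∈ s) (hy : y ∈ s) :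
    u x = u y := by
  have hle : ‖u x - u y‖ ≤ 0 * ‖x - y‖ :=
    hs.norm_image_sub_le_of_norm_hasDerivWithin_le hu (fun _ _ => norm_zero.le) hy hx
  rwa [zero_mul, norm_le_zero_iff, sub_eq_zero] at hle

theorem exists_eq_add_smul_of_second_deriv_eq_zero (hs : Convex ℝ s)
    (hu : ∀ x ∈ s, HasDerivWithinAt u (u' x) s x)
    (hu' : ∀ x ∈ s, HasDerivWithinAt u' 0 s x) :
    ∃ a b : E, ∀ x ∈ s, u x = a + x • b := by
  obtain rfl | ⟨x₀, hx₀⟩ := s.eq_empty_or_nonempty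
  · simp
  have hdiff : ∀ x ∈ s, HasDerivWithinAt (fun y => u y - y • u' x₀) 0 s x := by
    intro x hx
    have hconst : u' x = u' x₀ := eq_of_hasDerivWithinAt_eq_zero hs hu' hx hx₀
    simpa [hconst] using (hu x hx).fun_sub ((hasDerivWithinAt_id x s).smul_const (u' x₀))
  exact ⟨u x₀ - x₀ • u' x₀, u' x₀, fun x hx =>
    sub_eq_iff_eq_add.mp (eq_of_hasDerivWithinAt_eq_zero hs hdiff hx hx₀)⟩

end Affine

section RealPower

variable {s : Set ℝ} {f f' : ℝ → ℝ}

theorem hasDerivWithinAt_deriv_rpow_const {f'' x : ℝ} (p : ℝ) (hpos : 0 < f x)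
    (hf : HasDerivWithinAt f (f' x) s x) (hf' : HasDerivWithinAt f' f'' s x) :
    HasDerivWithinAt (fun y => f' y * p * f y ^ (p - 1))
      (p * f x ^ (p - 2) * (f x * f'' - (1 - p) * f' x ^ 2)) s x := by
  have hpow : f x ^ (p - 1) = f x ^ (p - 2) * f x := by
    rw [← Real.rpow_add_one hpos.ne']
    ring_nf
  have hexp : p - 1 - 1 = p - 2 := by ring
  refine ((hf'.mul_const p).mul (hf.rpow_const (p := p - 1) (.inl hpos.ne'))).congr_deriv ?_
  rw [hexp, hpow]
  ring

theorem exists_rpow_eq_add_mul_of_one_sub_mul_sq_eq {f'' : ℝ → ℝ} {p : ℝ}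
    (hs : Convex ℝ s)
    (hf : ∀ x ∈ s, HasDerivWithinAt f (f' x) s x)
    (hf' : ∀ x ∈ s, HasDerivWithinAt f' (f'' x) s x) (hpos : ∀ x ∈ s, 0 < f x)
    (hode : ∀ x ∈ s, (1 - p) * f' x ^ 2 = f x * f'' x) :
    ∃ a b : ℝ, ∀ x ∈ s, f x ^ p = a + b * x := by
  have hderiv : ∀ x ∈ s, HasDerivWithinAt (fun y => f y ^ p) (f' x * p * f x ^ (p - 1)) s x :=
    fun x hx => (hf x hx).rpow_const (.inl (hpos x hx).ne')
  have hderiv₂ : ∀ x ∈ s, HasDerivWithinAt (fun y => f' y * p * f y ^ (p - 1)) 0 s x := by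
    intro x hx
    simpa [hode x hx] using
      hasDerivWithinAt_deriv_rpow_const p (hpos x hx) (hf x hx) (hf' x hx)
  obtain ⟨a, b, hab⟩ := exists_eq_add_smul_of_second_deriv_eq_zero hs hderiv hderiv₂
  exact ⟨a, b, fun x hx => by simpa [mul_comm] using hab x hx⟩

theorem inv_sq_rpow_neg_half {y : ℝ} (hy : 0 ≤ y) : ((y ^ (-1 / 2 : ℝ)) ^ 2)⁻¹ = y := by
  rw [← Real.rpow_mul_natCast hy, ← Real.rpow_neg hy]
  norm_num

theorem ode_solution_general {f'' : ℝ → ℝ} (hs : Convex ℝ s)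
    (hf : ∀ x ∈ s, HasDerivWithinAt f (f' x) s x)
    (hf' : ∀ x ∈ s, HasDerivWithinAt f' (f'' x) s x) (hpos : ∀ x ∈ s, 0 < f x)
    (hode : ∀ x ∈ s, 3 * f' x ^ 2 = 2 * f x * f'' x) :
    ∃ a b : ℝ, (∀ x ∈ s, a + b * x ≠ 0) ∧ ∀ x ∈ s, f x = ((a + b * x) ^ 2)⁻¹ := by
  have hode_half : ∀ x ∈ s, (1 - (-1 / 2 : ℝ)) * f' x ^ 2 = f x * f'' x :=
    fun x hx => by linear_combination hode x hx / 2
  obtain ⟨a, b, hab⟩ := exists_rpow_eq_add_mul_of_one_sub_mul_sq_eq hs hf hf' hpos hode_half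
  refine ⟨a, b, fun x hx => ?_, fun x hx => ?_⟩
  · rw [← hab x hx]
    exact (Real.rpow_pos_of_pos (hpos x hx) _).ne'
  · rw [← hab x hx]
    exact (inv_sq_rpow_neg_half (hpos x hx).le).symm

end RealPower

/-- If `f` is smooth and positive on a nonempty open interval `I ⊆ ℝ` and satisfies the
ODE `3 (f′)² = 2 f f″` on `I`, then `f(x) = (a + bx)⁻²` on `I` for some constants
`a, b ∈ ℝ` with `a + bx ≠ 0` on `I`. -/
theorem ode_solution (I : Set ℝ) (hI : IsOpen I) (hIne : I.Nonempty)
    (hIconn : IsPreconnected I)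
    (f : ℝ → ℝ) (hf : ContDiffOn ℝ (⊤ : ℕ∞) f I) (hfpos : ∀ x ∈ I, 0 < f x)
    (hode : ∀ x ∈ I, 3 * (deriv f x) ^ 2 = 2 * f x * deriv (deriv f) x) :
    ∃ a b : ℝ, (∀ x ∈ I, a + b * x ≠ 0) ∧ ∀ x ∈ I, f x = ((a + b * x) ^ 2)⁻¹ := by
  obtain ⟨hdiff, hsmooth⟩ := (contDiffOn_infty_iff_deriv_of_isOpen hI).mp hf
  have hdiff' : DifferentiableOn ℝ (deriv f) I := hsmooth.differentiableOn (by simp)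
  exact ode_solution_general hIconn.convex
    (fun x hx => (hdiff.hasDerivAt (hI.mem_nhds hx)).hasDerivWithinAt)
    (fun x hx => (hdiff'.hasDerivAt (hI.mem_nhds hx)).hasDerivWithinAt) hfpos hode
end

section
/- Let c₁, …, c₆ ∈ ℝ, let L(x,y,p,q) = c₁ + c₂x + c₃y + c₄p + c₅q + c₆(xp + yq), and let D = L⁻² on the open set where L ≠ 0. Then D satisfies identically the equations 3 D_i² − 2 D D_{ii} = 0 for each i ∈ {x, y, p, q} and 3 D_x D_y − 2 D D_{xy} = 0, 3 D_x D_q − 2 D D_{xq} = 0, 3 D_p D_y − 2 D D_{py} = 0, 3 D_p D_q − 2 D D_{pq} = 0; moreover −2 D D_{yq} + 3 D_x D_p − 4 D D_{xp} = 12 L⁻⁶ (c₁c₆ − c₂c₄ − c₃c₅) and −2 D D_{xp} + 3 D_y D_q − 4 D D_{yq} = 12 L⁻⁶ (c₁c₆ − c₂c₄ − c₃c₅), so the last two equations vanish identically if and only if c₂c₄ + c₃c₅ − c₁c₆ = 0. -/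
/-!
For `D = f⁻ⁿ` the products `fᵢ fⱼ` cancel in `(n + 1) Dᵢ Dⱼ − n D Dᵢⱼ`, leaving `n² f⁻²ⁿ⁻¹ fᵢⱼ`.
With `n = 2` and `f = L` the first eight equations therefore say `Lᵢⱼ = 0`, and the only second
derivatives of `L` that survive are `L_{xp} = L_{yq} = c₆`. In the other two combinations the first
derivatives remain, and the value is `12 L⁻⁶ (c₆ L − L_x L_p − L_y L_q)`, whose last factor is the
constant `c₁c₆ − c₂c₄ − c₃c₅`. If this constant is nonzero, then `L` cannot vanish identically, so
these equations fail wherever `L ≠ 0`.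
-/

section InversePower

open scoped Topology

variable {𝕜 E : Type*} [NontriviallyNormedField 𝕜] [NormedAddCommGroup E] [NormedSpace 𝕜 E]
  {f : E → 𝕜} {x : E}

theorem fderiv_inv_pow (n : ℕ) (hf : DifferentiableAt 𝕜 f x) (hx : f x ≠ 0) :
    fderiv 𝕜 (fun y => (f y ^ n)⁻¹) x = (-n * (f x ^ (n + 1))⁻¹) • fderiv 𝕜 f x := by
  have hpow : HasDerivAt (fun t : 𝕜 => (t ^ n)⁻¹) (-n * (f x ^ (n + 1))⁻¹) (f x) := by
    convert hasDerivAt_zpow (-n : ℤ) (f x) (.inl hx) using 1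
    · simp only [zpow_neg, zpow_natCast]
    · rw [← neg_add', zpow_neg, ← Nat.cast_succ, zpow_natCast]
      push_cast
      rfl
  exact (hpow.comp_hasFDerivAt x hf.hasFDerivAt).fderiv

theorem fderiv_fderiv_inv_pow (n : ℕ) (hf : ContDiffAt 𝕜 2 f x) (hx : f x ≠ 0) (a b : E) :
    fderiv 𝕜 (fun y => fderiv 𝕜 (fun z => (f z ^ n)⁻¹) y b) x a =
      n * (n + 1) * (f x ^ (n + 2))⁻¹ * fderiv 𝕜 f x a * fderiv 𝕜 f x b -
        n * (f x ^ (n + 1))⁻¹ * fderiv 𝕜 (fun y => fderiv 𝕜 f y b) x a := by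
  have first_order : (fun y => fderiv 𝕜 (fun z => (f z ^ n)⁻¹) y b) =ᶠ[𝓝 x]
      fun y => -n * ((f y ^ (n + 1))⁻¹ * fderiv 𝕜 f y b) := by
    filter_upwards [hf.eventually (by simp), hf.continuousAt.eventually_ne hx] with y hy hy0
    rw [fderiv_inv_pow n (hy.differentiableAt two_ne_zero) hy0, smul_apply, smul_eq_mul, mul_assoc]
  have hdf : DifferentiableAt 𝕜 f x := hf.differentiableAt two_ne_zero
  have hdb : DifferentiableAt 𝕜 (fun y => fderiv 𝕜 f y b) x :=
    ((hf.fderiv_right (m := 1) le_rfl).differentiableAt one_ne_zero).clm_apply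
      (differentiableAt_const b)
  have hdpow : DifferentiableAt 𝕜 (fun y => (f y ^ (n + 1))⁻¹) x :=
    (hdf.pow (n + 1)).inv (pow_ne_zero _ hx)
  rw [first_order.fderiv_eq, fderiv_const_mul (hdpow.fun_mul hdb), fderiv_fun_mul hdpow hdb,
    fderiv_inv_pow (n + 1) hdf hx]
  simp only [smul_apply, add_apply, smul_eq_mul]
  push_cast
  ring

end InversePower

section PartialDerivatives

variable {f : (Fin 4 → ℝ) → ℝ} {u : Fin 4 → ℝ}

theorem pd_inv_pow (n : ℕ) (hf : DifferentiableAt ℝ f u) (hu : f u ≠ 0) (i : Fin 4) :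
    pd i (fun v => (f v ^ n)⁻¹) u = -n * (f u ^ (n + 1))⁻¹ * pd i f u :=
  DFunLike.congr_fun (fderiv_inv_pow n hf hu) (Pi.single i 1)

theorem pd_pd_inv_pow (n : ℕ) (hf : ContDiffAt ℝ 2 f u) (hu : f u ≠ 0) (i j : Fin 4) :
    pd i (pd j fun v => (f v ^ n)⁻¹) u =
      n * (n + 1) * (f u ^ (n + 2))⁻¹ * pd i f u * pd j f u -
        n * (f u ^ (n + 1))⁻¹ * pd i (pd j f) u :=
  fderiv_fderiv_inv_pow n hf hu _ _

theorem inv_pow_hessian_combination {D : (Fin 4 → ℝ) → ℝ} (n : ℕ)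
    (hD : D = fun v => (f v ^ n)⁻¹) (hf : ContDiffAt ℝ 2 f u) (hu : f u ≠ 0) (i j : Fin 4) :
    (n + 1) * pd i D u * pd j D u - n * D u * pd i (pd j D) u =
      n ^ 2 * (f u ^ (2 * n + 1))⁻¹ * pd i (pd j f) u := by
  have hdf : DifferentiableAt ℝ f u := hf.differentiableAt two_ne_zero
  rw [hD, pd_inv_pow n hdf hu, pd_inv_pow n hdf hu, pd_pd_inv_pow n hf hu]
  field_simp
  ring

theorem inv_pow_mixed_combination {D : (Fin 4 → ℝ) → ℝ} (n : ℕ)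
    (hD : D = fun v => (f v ^ n)⁻¹) (hf : ContDiffAt ℝ 2 f u) (hu : f u ≠ 0) (i j k l : Fin 4) :
    -n * D u * pd k (pd l D) u + (n + 1) * pd i D u * pd j D u - 2 * n * D u * pd i (pd j D) u =
      n ^ 2 * (f u ^ (2 * n + 2))⁻¹ *
        (f u * (2 * pd i (pd j f) u + pd k (pd l f) u) -
          (n + 1) * (pd i f u * pd j f u + pd k f u * pd l f u)) := by
  have hdf : DifferentiableAt ℝ f u := hf.differentiableAt two_ne_zero
  rw [hD, pd_inv_pow n hdf hu, pd_inv_pow n hdf hu, pd_pd_inv_pow n hf hu,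
    pd_pd_inv_pow n hf hu]
  field_simp
  ring

end PartialDerivatives

/-- The quadratic polynomial `c₁ + c₂x + c₃y + c₄p + c₅q + c₆(xp + yq)` on `ℝ⁴`, whose inverse
square is the solution. In the coordinates `x = u 0`, `y = u 1`, `p = u 2`, `q = u 3`, the index
shift `i ↦ i + 2` of `Fin 4` exchanges `x` with `p` and `y` with `q`. -/
def pairingQuadratic (c₁ c₂ c₃ c₄ c₅ c₆ : ℝ) (u : Fin 4 → ℝ) : ℝ :=
  c₁ + c₂ * u 0 + c₃ * u 1 + c₄ * u 2 + c₅ * u 3 + c₆ * (u 0 * u 2 + u 1 * u 3)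

namespace pairingQuadratic

variable (c₁ c₂ c₃ c₄ c₅ c₆ : ℝ)

theorem contDiff {n : WithTop ℕ∞} : ContDiff ℝ n (pairingQuadratic c₁ c₂ c₃ c₄ c₅ c₆) := by
  unfold pairingQuadratic
  fun_prop

theorem pd_eq (i : Fin 4) :
    pd i (pairingQuadratic c₁ c₂ c₃ c₄ c₅ c₆) =
      fun u => ![c₂, c₃, c₄, c₅] i + c₆ * u (i + 2) := by
  funext u
  have hcoord (k : Fin 4) := hasFDerivAt_apply (𝕜 := ℝ) k u
  have hderiv := ((((((hcoord 0).const_mul c₂).const_add c₁).add ((hcoord 1).const_mul c₃)).add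
    ((hcoord 2).const_mul c₄)).add ((hcoord 3).const_mul c₅)).add
      ((((hcoord 0).mul (hcoord 2)).add ((hcoord 1).mul (hcoord 3))).const_mul c₆)
  refine (DFunLike.congr_fun hderiv.fderiv (Pi.single i 1)).trans ?_
  fin_cases i <;> simp

theorem pd_pd (i j : Fin 4) (u : Fin 4 → ℝ) :
    pd i (pd j (pairingQuadratic c₁ c₂ c₃ c₄ c₅ c₆)) u = if j + 2 = i then c₆ else 0 := by
  have hderiv := ((hasFDerivAt_apply (𝕜 := ℝ) (j + 2) u).const_mul c₆).const_add
    (![c₂, c₃, c₄, c₅] j)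
  rw [pd_eq]
  refine (DFunLike.congr_fun hderiv.fderiv (Pi.single i 1)).trans ?_
  simp [Pi.single_apply]

theorem mul_sub_pd_mul_pd (u : Fin 4 → ℝ) :
    pairingQuadratic c₁ c₂ c₃ c₄ c₅ c₆ u * c₆ -
        (pd 0 (pairingQuadratic c₁ c₂ c₃ c₄ c₅ c₆) u *
            pd 2 (pairingQuadratic c₁ c₂ c₃ c₄ c₅ c₆) u +
          pd 1 (pairingQuadratic c₁ c₂ c₃ c₄ c₅ c₆) u *
            pd 3 (pairingQuadratic c₁ c₂ c₃ c₄ c₅ c₆) u) =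
      c₁ * c₆ - c₂ * c₄ - c₃ * c₅ := by
  simp only [pd_eq, pairingQuadratic, Fin.reduceAdd, Matrix.cons_val]
  ring

variable {c₁ c₂ c₃ c₄ c₅ c₆}

theorem exists_ne_zero (h : c₁ * c₆ - c₂ * c₄ - c₃ * c₅ ≠ 0) :
    ∃ u, pairingQuadratic c₁ c₂ c₃ c₄ c₅ c₆ u ≠ 0 := by
  by_contra! hzero
  have hpd (i : Fin 4) : pd i (pairingQuadratic c₁ c₂ c₃ c₄ c₅ c₆) 0 = 0 := by
    simp [funext hzero, pd]
  apply h
  rw [← mul_sub_pd_mul_pd c₁ c₂ c₃ c₄ c₅ c₆ 0, hzero, hpd 0, hpd 1]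
  ring

variable {D : (Fin 4 → ℝ) → ℝ} {u : Fin 4 → ℝ}

theorem inv_sq_hessian_combination_eq_zero
    (hD : D = fun v => (pairingQuadratic c₁ c₂ c₃ c₄ c₅ c₆ v ^ 2)⁻¹)
    (hu : pairingQuadratic c₁ c₂ c₃ c₄ c₅ c₆ u ≠ 0) {i j : Fin 4} (hij : j + 2 ≠ i) :
    3 * pd i D u * pd j D u - 2 * D u * pd i (pd j D) u = 0 := by
  have h := inv_pow_hessian_combination 2 hD (contDiff ..).contDiffAt hu i j
  push_cast [pd_pd, if_neg hij] at h
  linear_combination h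

theorem inv_sq_mixed_combination (hD : D = fun v => (pairingQuadratic c₁ c₂ c₃ c₄ c₅ c₆ v ^ 2)⁻¹)
    (hu : pairingQuadratic c₁ c₂ c₃ c₄ c₅ c₆ u ≠ 0) :
    -2 * D u * pd 1 (pd 3 D) u + 3 * pd 0 D u * pd 2 D u - 4 * D u * pd 0 (pd 2 D) u =
        12 * (pairingQuadratic c₁ c₂ c₃ c₄ c₅ c₆ u ^ 6)⁻¹ * (c₁ * c₆ - c₂ * c₄ - c₃ * c₅) ∧
      -2 * D u * pd 0 (pd 2 D) u + 3 * pd 1 D u * pd 3 D u - 4 * D u * pd 1 (pd 3 D) u =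
        12 * (pairingQuadratic c₁ c₂ c₃ c₄ c₅ c₆ u ^ 6)⁻¹ * (c₁ * c₆ - c₂ * c₄ - c₃ * c₅) := by
  have hmixed := inv_pow_mixed_combination 2 hD (contDiff ..).contDiffAt hu
  have hxp := hmixed 0 2 1 3
  have hyq := hmixed 1 3 0 2
  push_cast [pd_pd, Fin.reduceAdd, if_true] at hxp hyq
  rw [← mul_sub_pd_mul_pd c₁ c₂ c₃ c₄ c₅ c₆ u]
  exact ⟨by linear_combination hxp, by linear_combination hyq⟩

end pairingQuadratic

/-- For `L(x,y,p,q) = c₁ + c₂x + c₃y + c₄p + c₅q + c₆(xp + yq)` and `D = L⁻²` on the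
set where `L ≠ 0`, the function `D` satisfies the eight equations
`3 Dᵢ² − 2 D Dᵢᵢ = 0`, `3 Dₓ D_y − 2 D D_{xy} = 0`, `3 Dₓ D_q − 2 D D_{xq} = 0`,
`3 D_p D_y − 2 D D_{py} = 0`, `3 D_p D_q − 2 D D_{pq} = 0`; the two remaining
combinations equal `12 L⁻⁶ (c₁c₆ − c₂c₄ − c₃c₅)`, hence they vanish identically
if and only if `c₂c₄ + c₃c₅ − c₁c₆ = 0`.
Coordinates: `x = u 0`, `y = u 1`, `p = u 2`, `q = u 3`. -/
theorem inverse_square_solves_system (c₁ c₂ c₃ c₄ c₅ c₆ : ℝ)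
    (L D : (Fin 4 → ℝ) → ℝ)
    (hL : L = fun u => c₁ + c₂ * u 0 + c₃ * u 1 + c₄ * u 2 + c₅ * u 3 +
      c₆ * (u 0 * u 2 + u 1 * u 3))
    (hD : D = fun u => ((L u) ^ 2)⁻¹) :
    (∀ u : Fin 4 → ℝ, L u ≠ 0 →
      ((∀ i : Fin 4, 3 * (pd i D u) ^ 2 - 2 * D u * pd i (pd i D) u = 0) ∧
        3 * pd 0 D u * pd 1 D u - 2 * D u * pd 0 (pd 1 D) u = 0 ∧
        3 * pd 0 D u * pd 3 D u - 2 * D u * pd 0 (pd 3 D) u = 0 ∧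
        3 * pd 2 D u * pd 1 D u - 2 * D u * pd 2 (pd 1 D) u = 0 ∧
        3 * pd 2 D u * pd 3 D u - 2 * D u * pd 2 (pd 3 D) u = 0 ∧
        -2 * D u * pd 1 (pd 3 D) u + 3 * pd 0 D u * pd 2 D u
          - 4 * D u * pd 0 (pd 2 D) u
          = 12 * ((L u) ^ 6)⁻¹ * (c₁ * c₆ - c₂ * c₄ - c₃ * c₅) ∧
        -2 * D u * pd 0 (pd 2 D) u + 3 * pd 1 D u * pd 3 D u
          - 4 * D u * pd 1 (pd 3 D) u
          = 12 * ((L u) ^ 6)⁻¹ * (c₁ * c₆ - c₂ * c₄ - c₃ * c₅))) ∧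
    ((∀ u : Fin 4 → ℝ, L u ≠ 0 →
        -2 * D u * pd 1 (pd 3 D) u + 3 * pd 0 D u * pd 2 D u
          - 4 * D u * pd 0 (pd 2 D) u = 0 ∧
        -2 * D u * pd 0 (pd 2 D) u + 3 * pd 1 D u * pd 3 D u
          - 4 * D u * pd 1 (pd 3 D) u = 0) ↔
      c₂ * c₄ + c₃ * c₅ - c₁ * c₆ = 0) := by
  obtain rfl : L = pairingQuadratic c₁ c₂ c₃ c₄ c₅ c₆ := hL
  refine ⟨fun u hu => ⟨fun i => ?_, ?_, ?_, ?_, ?_,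
    pairingQuadratic.inv_sq_mixed_combination hD hu⟩, fun h => ?_, fun h u hu => ?_⟩
  · rw [sq, ← mul_assoc]
    exact pairingQuadratic.inv_sq_hessian_combination_eq_zero hD hu (by simp)
  iterate 4 exact pairingQuadratic.inv_sq_hessian_combination_eq_zero hD hu (by decide)
  · by_contra hc
    have hconst : c₁ * c₆ - c₂ * c₄ - c₃ * c₅ ≠ 0 := fun h0 => hc (by linear_combination -h0)
    obtain ⟨u, hu⟩ := pairingQuadratic.exists_ne_zero hconst
    have hvanish := (pairingQuadratic.inv_sq_mixed_combination hD hu).1.symm.trans (h u hu).1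
    exact mul_ne_zero (by positivity) hconst hvanish
  · have hconst : c₁ * c₆ - c₂ * c₄ - c₃ * c₅ = 0 := by linear_combination -h
    simpa only [hconst, mul_zero] using pairingQuadratic.inv_sq_mixed_combination hD hu
end

section
/- Let A, B, C, D, E, f_xx, f_xy, f_yy ∈ ℝ satisfy the Monge–Ampère relation A f_xx + 2B f_xy + C f_yy + D (f_xx f_yy − f_xy²) + E = 0, and let G* be the symmetric 2×2 real matrix [[2C + 2D f_xx, −2B + 2D f_xy], [−2B + 2D f_xy, 2A + 2D f_yy]]. Then det G* = 4 (AC − B² − DE), i.e., det G* equals four times the Pfaffian of the corresponding Monge–Ampère structure; consequently G* is invertible if and only if AC − B² − DE ≠ 0. -/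
/-!
For `2 × 2` matrices, `det (adj S + d • H) = det S + d * (tr (S * H) + d * det H)`. Let `S` carry
the coefficients `A, B, C` of a Monge–Ampère equation and let `H` be the Hessian. The pullback
metric is `2 • (adj S + d • H)`, and the bracket is the left-hand side of the equation without its
constant term `e`. So the determinant equals `4 * (det S - d * e)` plus `4 * d` times the left-hand
side of the equation, which vanishes on solutions.
-/

section

variable {R : Type*} [CommRing R]

theorem det_add_fin_two (M N : Matrix (Fin 2) (Fin 2) R) :
    (M + N).det = M.det + (M.adjugate * N).trace + N.det := by
  simp only [Matrix.adjugate_fin_two, Matrix.det_fin_two, Matrix.trace_fin_two, Matrix.mul_apply,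
    Fin.sum_univ_two, Matrix.add_apply, Matrix.of_apply, Matrix.cons_val]
  ring

theorem det_adjugate_add_smul_fin_two (S H : Matrix (Fin 2) (Fin 2) R) (d : R) :
    (S.adjugate + d • H).det = S.det + d * ((S * H).trace + d * H.det) := by
  have adjugate_adjugate : S.adjugate.adjugate = S := by
    simp [Matrix.adjugate_adjugate]
  have det_adjugate : S.adjugate.det = S.det := by
    simp [Matrix.det_adjugate]
  rw [det_add_fin_two, adjugate_adjugate, det_adjugate, Matrix.mul_smul, Matrix.trace_smul,
    Matrix.det_smul, Fintype.card_fin, smul_eq_mul]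
  ring

/-- The left-hand side of the Monge–Ampère equation, as a function of the Hessian `H`. The classical
coefficients are encoded as `S = !![A, B; B, C]`, `d = D` and `e = E`. -/
def mongeAmpere (S : Matrix (Fin 2) (Fin 2) R) (d e : R) (H : Matrix (Fin 2) (Fin 2) R) : R :=
  (S * H).trace + d * H.det + e

/-- The Pfaffian of the Monge–Ampère structure with the coefficients `S`, `d`, `e` of
`mongeAmpere`. -/
def mongeAmperePfaffian (S : Matrix (Fin 2) (Fin 2) R) (d e : R) : R :=
  S.det - d * e

/-- The coordinate matrix of the pullback of the Lychagin–Rubtsov metric along `df`, where `f` has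
Hessian `H`. The adjugate encodes the block `[[C, −B], [−B, A]]` for `S = !![A, B; B, C]`. -/
def pullbackMetric (S : Matrix (Fin 2) (Fin 2) R) (d : R) (H : Matrix (Fin 2) (Fin 2) R) :
    Matrix (Fin 2) (Fin 2) R :=
  (2 : R) • (S.adjugate + d • H)

theorem mongeAmpere_of (A B C D E fxx fxy fyy : R) :
    mongeAmpere !![A, B; B, C] D E !![fxx, fxy; fxy, fyy] =
      A * fxx + 2 * B * fxy + C * fyy + D * (fxx * fyy - fxy ^ 2) + E := by
  rw [mongeAmpere, Matrix.mul_fin_two, Matrix.trace_fin_two_of, Matrix.det_fin_two_of]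
  ring

theorem mongeAmperePfaffian_of (A B C D E : R) :
    mongeAmperePfaffian !![A, B; B, C] D E = A * C - B ^ 2 - D * E := by
  rw [mongeAmperePfaffian, Matrix.det_fin_two_of, sq]

theorem pullbackMetric_of (A B C D fxx fxy fyy : R) :
    pullbackMetric !![A, B; B, C] D !![fxx, fxy; fxy, fyy] =
      !![2 * C + 2 * D * fxx, -2 * B + 2 * D * fxy;
        -2 * B + 2 * D * fxy, 2 * A + 2 * D * fyy] := by
  simp [pullbackMetric, Matrix.adjugate_fin_two_of, mul_add, mul_assoc]

theorem det_pullbackMetric (S : Matrix (Fin 2) (Fin 2) R) (d e : R)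
    (H : Matrix (Fin 2) (Fin 2) R) :
    (pullbackMetric S d H).det = 4 * (mongeAmperePfaffian S d e + d * mongeAmpere S d e H) := by
  rw [pullbackMetric, Matrix.det_smul, Fintype.card_fin, det_adjugate_add_smul_fin_two,
    mongeAmperePfaffian, mongeAmpere]
  ring

theorem isUnit_pullbackMetric_iff (h2 : IsUnit (2 : R)) (S : Matrix (Fin 2) (Fin 2) R) (d e : R)
    (H : Matrix (Fin 2) (Fin 2) R) :
    IsUnit (pullbackMetric S d H) ↔
      IsUnit (mongeAmperePfaffian S d e + d * mongeAmpere S d e H) := by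
  have h4 : IsUnit (4 : R) := by
    convert h2.pow 2 using 1
    norm_num
  rw [Matrix.isUnit_iff_isUnit_det, det_pullbackMetric S d e H, h4.mul_left_iff]

theorem det_pullback_metric_on_shell_general {S H : Matrix (Fin 2) (Fin 2) R} {d e : R}
    (h2 : IsUnit (2 : R)) (hMA : mongeAmpere S d e H = 0) :
    (pullbackMetric S d H).det = 4 * mongeAmperePfaffian S d e ∧
      (IsUnit (pullbackMetric S d H) ↔ IsUnit (mongeAmperePfaffian S d e)) := by
  have on_shell : mongeAmperePfaffian S d e + d * mongeAmpere S d e H =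
      mongeAmperePfaffian S d e := by
    rw [hMA, mul_zero, add_zero]
  exact ⟨on_shell ▸ det_pullbackMetric S d e H, on_shell ▸ isUnit_pullbackMetric_iff h2 S d e H⟩

end

/-- If the Monge–Ampère relation `A fxx + 2B fxy + C fyy + D(fxx fyy − fxy²) + E = 0`
holds, then the coordinate matrix `G* = [[2C, −2B], [−2B, 2A]] + 2D Hess(f)` of the
pullback metric has determinant `4(AC − B² − DE)`, four times the Pfaffian, and is
invertible iff `AC − B² − DE ≠ 0`. -/
theorem det_pullback_metric_on_shell (A B C D E fxx fxy fyy : ℝ)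
    (hMA : A * fxx + 2 * B * fxy + C * fyy + D * (fxx * fyy - fxy ^ 2) + E = 0) :
    (!![2 * C + 2 * D * fxx, -2 * B + 2 * D * fxy;
        -2 * B + 2 * D * fxy, 2 * A + 2 * D * fyy] : Matrix (Fin 2) (Fin 2) ℝ).det =
      4 * (A * C - B ^ 2 - D * E) ∧
    (IsUnit (!![2 * C + 2 * D * fxx, -2 * B + 2 * D * fxy;
        -2 * B + 2 * D * fxy, 2 * A + 2 * D * fyy] : Matrix (Fin 2) (Fin 2) ℝ) ↔
      A * C - B ^ 2 - D * E ≠ 0) := by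
  rw [← mongeAmpere_of] at hMA
  simpa only [pullbackMetric_of, mongeAmperePfaffian_of, isUnit_iff_ne_zero] using
    det_pullback_metric_on_shell_general two_ne_zero.isUnit hMA
end
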